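/- For a partition λ = (s^r) + μ ∪ ν' containing the r×s rectangle with μ having at most r parts and ν at most s parts, the hook Schur function (supersymmetric Schur function) factorizes as hs_λ(x₁,…,x_r / y₁,…,y_s) = ∏_{i=1}^{r} ∏_{j=1}^{s} (xᵢ + yⱼ) · s_μ(x₁,…,x_r) · s_ν(y₁,…,y_s). -/

import Mathlib

/-- Complete homogeneous symmetric polynomial `h_k` evaluated at `x : Fin m → K`:
the sum of all monomials of degree `k` (indexed by weakly increasing tuples). -/
def hcomplete {K : Type*} [CommRing K] {m : ℕ} (x : Fin m → K) (k : ℕ) : K :=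
  ∑ f ∈ Finset.univ.filter
      (fun f : Fin k → Fin m => ∀ i j : Fin k, i ≤ j → f i ≤ f j),
    ∏ i, x (f i)

/-- Elementary symmetric polynomial `e_k` evaluated at `y : Fin m → K`
(indexed by strictly increasing tuples). -/
def eelem {K : Type*} [CommRing K] {m : ℕ} (y : Fin m → K) (k : ℕ) : K :=
  ∑ f ∈ Finset.univ.filter
      (fun f : Fin k → Fin m => ∀ i j : Fin k, i < j → f i < f j),
    ∏ i, y (f i)

/-- `h_k` extended by `0` to negative integer indices. -/
def hz {K : Type*} [CommRing K] {m : ℕ} (x : Fin m → K) (k : ℤ) : K :=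
  if k < 0 then 0 else hcomplete x k.toNat

/-- Schur polynomial `s_μ(x₁,…,x_m)` via the Jacobi–Trudi determinant
`det(h_{μ_i - i + j})_{0 ≤ i,j < m}`. -/
noncomputable def schur {K : Type*} [CommRing K] {m : ℕ} (x : Fin m → K)
    (mu : ℕ → ℕ) : K :=
  Matrix.det (Matrix.of fun i j : Fin m => hz x ((mu i : ℤ) - i + j))

/-- Supersymmetric complete function `H_k(x/y) = Σ_{a+b=k} h_a(x) e_b(y)`. -/
def superH {K : Type*} [CommRing K] {r s : ℕ} (x : Fin r → K) (y : Fin s → K)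
    (k : ℕ) : K :=
  ∑ j ∈ Finset.range (k + 1), hcomplete x (k - j) * eelem y j

/-- `H_k(x/y)` extended by `0` to negative integer indices. -/
def superHz {K : Type*} [CommRing K] {r s : ℕ} (x : Fin r → K) (y : Fin s → K)
    (k : ℤ) : K :=
  if k < 0 then 0 else superH x y k.toNat

/-- The hook Schur (supersymmetric Schur) function `hs_λ(x/y)` via the super
Jacobi–Trudi determinant `det(H_{λ_i - i + j})` of size `m ≥ ℓ(λ)`. -/
noncomputable def hookSchur {K : Type*} [CommRing K] {r s : ℕ} (x : Fin r → K)
    (y : Fin s → K) (m : ℕ) (lam : ℕ → ℕ) : K :=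
  Matrix.det (Matrix.of fun i j : Fin m => superHz x y ((lam i : ℤ) - i + j))

/-! Write `H(t) = ∑ h_k(x) t^k` and `E(t) = ∑ e_k(y) t^k`, so that the super Jacobi–Trudi matrix is
made of coefficients of `H E`. Column operations multiply the series in column `j` by
`∏_{i < j} (1 - x_i t)`. Since `H(t) ∏_i (1 - x_i t) = 1`, the columns `j ≥ r` then only see `E`,
and as `e_k(y) = 0` for `k > s` the matrix becomes block lower triangular.

In the upper left `r × r` block the factors `1 + y_l t` of `E` are removed one at a time: writing
`1 + b t = (1 - x_j t) + (x_j + b) t` in column `j` exhibits the matrix as the one without this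
factor times a bidiagonal matrix of determinant `∏_j (x_j + b)`. What is left is the Jacobi–Trudi
matrix of `s_μ(x)`.

The lower right block is the dual Jacobi–Trudi matrix of `ν`. The Toeplitz matrices of
`∑ h_k(y) t^k` and `E(-t)` are inverse to each other, so by Jacobi's theorem complementary minors
agree up to sign; choosing the columns by the boundary path of `ν` identifies its determinant with
`s_ν(y)`. -/

namespace HookSchur

open PowerSeries
open scoped Finset

variable {K : Type*} [CommRing K]

section GeneratingFunctions

theorem coeff_prod_one_add_C_mul_X {ι : Type*} (S : Finset ι) (a : ι → K) (d : ℕ) :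
    coeff d (∏ i ∈ S, (1 + C (a i) * X)) = ∑ T ∈ S.powersetCard d, ∏ i ∈ T, a i := by
  simp_rw [Finset.prod_one_add, Finset.prod_mul_distrib, Finset.prod_const, ← map_prod, map_sum,
    coeff_C_mul, coeff_X_pow, mul_ite, mul_one, mul_zero, ← Finset.sum_filter, eq_comm (a := d),
    Finset.powersetCard_eq_filter]

theorem coeff_prod_one_add_C_mul_X_of_card_lt {ι : Type*} {S : Finset ι} (a : ι → K) {d : ℕ}
    (hd : #S < d) : coeff d (∏ i ∈ S, (1 + C (a i) * X)) = 0 := by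
  rw [coeff_prod_one_add_C_mul_X, Finset.powersetCard_eq_empty.2 hd, Finset.sum_empty]

theorem hcomplete_zero {m : ℕ} (x : Fin m → K) : hcomplete x 0 = 1 := by
  simp [hcomplete]

open scoped Classical in
theorem hcomplete_eq_sum_monotone {m : ℕ} (x : Fin m → K) (k : ℕ) :
    hcomplete x k = ∑ f : Fin k → Fin m with Monotone f, ∏ i, x (f i) :=
  Finset.sum_congr (by ext f; simp only [Finset.mem_filter_univ]; rfl) fun _ _ => rfl

theorem monotone_cons_zero {k m : ℕ} {g : Fin k → Fin (m + 1)} :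
    Monotone (Fin.cons 0 g : Fin (k + 1) → Fin (m + 1)) ↔ Monotone g := by
  refine ⟨fun h => h.comp Fin.strictMono_succ.monotone, fun h i j hij => ?_⟩
  cases i using Fin.cases with
  | zero => exact Fin.zero_le _
  | succ i =>
    cases j using Fin.cases with
    | zero => exact absurd hij (Fin.succ_pos i).not_ge
    | succ j => exact h (Fin.succ_le_succ_iff.1 hij)

theorem exists_eq_succ_comp {k m : ℕ} {f : Fin (k + 1) → Fin (m + 1)} (hf : Monotone f)
    (h0 : f 0 ≠ 0) : ∃ g : Fin (k + 1) → Fin m, Monotone g ∧ Fin.succ ∘ g = f := by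
  choose g hg using fun i => Fin.exists_succ_eq.2 fun hi : f i = 0 =>
    h0 (Fin.le_zero_iff.1 (hi ▸ hf (Fin.zero_le i)))
  refine ⟨g, fun i j hij => ?_, funext hg⟩
  rw [← Fin.succ_le_succ_iff, hg, hg]
  exact hf hij

theorem hcomplete_succ {m : ℕ} (x : Fin (m + 1) → K) (k : ℕ) :
    hcomplete x (k + 1) = x 0 * hcomplete x k + hcomplete (Fin.tail x) (k + 1) := by
  classical
  have filter_zero : ({f | Monotone f} : Finset (Fin (k + 1) → Fin (m + 1))).filter (· 0 = 0) =
      Finset.image (Fin.cons 0) {g | Monotone g} := by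
    ext f
    simp only [Finset.mem_filter, Finset.mem_image, Finset.mem_univ, true_and]
    constructor
    · rintro ⟨hf, h0⟩
      have hcons : Fin.cons 0 (Fin.tail f) = f := by rw [← h0, Fin.cons_self_tail]
      exact ⟨Fin.tail f, monotone_cons_zero.1 (hcons ▸ hf), hcons⟩
    · rintro ⟨g, hg, rfl⟩
      exact ⟨monotone_cons_zero.2 hg, rfl⟩
  have filter_ne_zero :
      ({f | Monotone f} : Finset (Fin (k + 1) → Fin (m + 1))).filter (¬ · 0 = 0) =
        Finset.image (Fin.succ ∘ ·) {g | Monotone g} := by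
    ext f
    simp only [Finset.mem_filter, Finset.mem_image, Finset.mem_univ, true_and]
    constructor
    · rintro ⟨hf, h0⟩
      exact exists_eq_succ_comp hf h0
    · rintro ⟨g, hg, rfl⟩
      exact ⟨Fin.strictMono_succ.monotone.comp hg, Fin.succ_ne_zero _⟩
  simp_rw [hcomplete_eq_sum_monotone]
  rw [← Finset.sum_filter_add_sum_filter_not _ (fun f => f 0 = 0), filter_zero, filter_ne_zero,
    Finset.sum_image fun _ _ _ _ h => (Fin.cons_injective2 h).2,
    Finset.sum_image (Function.Injective.comp_left (Fin.succ_injective m)).injOn, Finset.mul_sum]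
  simp only [Fin.prod_univ_succ, Fin.cons_zero, Fin.cons_succ, Fin.tail, Function.comp_apply]

open scoped Classical in
theorem eelem_eq_sum_strictMono {m : ℕ} (y : Fin m → K) (k : ℕ) :
    eelem y k = ∑ f : Fin k → Fin m with StrictMono f, ∏ i, y (f i) :=
  Finset.sum_congr (by ext f; simp only [Finset.mem_filter_univ]; rfl) fun _ _ => rfl

theorem eelem_eq_sum_powersetCard {m : ℕ} (y : Fin m → K) (k : ℕ) :
    eelem y k = ∑ T ∈ Finset.univ.powersetCard k, ∏ i ∈ T, y i := by
  classical
  rw [eelem_eq_sum_strictMono]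
  refine Finset.sum_bij' (fun f _ => Finset.univ.image f)
    (fun T hT => T.orderEmbOfFin (Finset.mem_powersetCard_univ.1 hT)) ?_ ?_ ?_ ?_ ?_
  · intro f hf
    simp [Finset.card_image_of_injective _ ((Finset.mem_filter_univ f).1 hf).injective]
  · intro T hT
    exact (Finset.mem_filter_univ _).2 (OrderEmbedding.strictMono _)
  · intro f hf
    exact (Finset.orderEmbOfFin_unique _ (by simp) ((Finset.mem_filter_univ f).1 hf)).symm
  · intro T hT
    simp
  · intro f hf
    rw [Finset.prod_image ((Finset.mem_filter_univ f).1 hf).injective.injOn]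

/-- The generating function `∑ h_k(x) t^k` of the complete homogeneous symmetric polynomials. -/
def hGen {m : ℕ} (x : Fin m → K) : K⟦X⟧ := PowerSeries.mk (hcomplete x)

/-- The generating function `∑ e_k(y) t^k` of the elementary symmetric polynomials. -/
def eGen {m : ℕ} (y : Fin m → K) : K⟦X⟧ := PowerSeries.mk (eelem y)

theorem constantCoeff_hGen {m : ℕ} (x : Fin m → K) : constantCoeff (hGen x) = 1 := by
  rw [← coeff_zero_eq_constantCoeff_apply, hGen, coeff_mk, hcomplete_zero]

theorem hGen_mul_one_sub {m : ℕ} (x : Fin (m + 1) → K) :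
    hGen x * (1 - C (x 0) * X) = hGen (Fin.tail x) := by
  ext k
  cases k with
  | zero => simp [hGen, hcomplete_zero]
  | succ k =>
    rw [mul_sub, mul_one, mul_left_comm, map_sub, coeff_C_mul, coeff_succ_mul_X]
    simp only [hGen, coeff_mk, hcomplete_succ, add_sub_cancel_left]

theorem hGen_mul_prod_one_sub {m : ℕ} (x : Fin m → K) :
    hGen x * ∏ i, (1 - C (x i) * X) = 1 := by
  induction m with
  | zero =>
    ext k
    cases k <;> simp [hGen, hcomplete, coeff_one]
  | succ m ih =>
    rw [Fin.prod_univ_succ, ← mul_assoc, hGen_mul_one_sub]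
    exact ih (Fin.tail x)

theorem eGen_eq_prod_one_add {m : ℕ} (y : Fin m → K) : eGen y = ∏ i, (1 + C (y i) * X) := by
  ext k
  rw [eGen, coeff_mk, eelem_eq_sum_powersetCard, coeff_prod_one_add_C_mul_X]

theorem hGen_mul_rescale_eGen {m : ℕ} (y : Fin m → K) :
    hGen y * rescale (-1) (eGen y) = 1 := by
  have hrescale (a : K) : rescale (-1) (1 + C a * X) = 1 - C a * X := by
    ext k
    rw [coeff_rescale]
    rcases k with _ | _ | k <;> simp [coeff_one]
  simp_rw [eGen_eq_prod_one_add, map_prod, hrescale, hGen_mul_prod_one_sub]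

theorem mk_superH {r s : ℕ} (x : Fin r → K) (y : Fin s → K) :
    PowerSeries.mk (superH x y) = hGen x * eGen y := by
  ext k
  rw [mul_comm, coeff_mul,
    Finset.Nat.sum_antidiagonal_eq_sum_range_succ fun i j => coeff i (eGen y) * coeff j (hGen x)]
  simp [superH, hGen, eGen, mul_comm]

end GeneratingFunctions

section CoeffZ

/-- The coefficient of `t ^ k` in a power series for an integer `k`, which is `0` if `k < 0`. -/
noncomputable def coeffZ (F : K⟦X⟧) (k : ℤ) : K :=
  if k < 0 then 0 else coeff k.toNat F

theorem hz_eq_coeffZ {m : ℕ} (x : Fin m → K) (k : ℤ) : hz x k = coeffZ (hGen x) k := by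
  simp [hz, coeffZ, hGen]

theorem superHz_eq_coeffZ {r s : ℕ} (x : Fin r → K) (y : Fin s → K) (k : ℤ) :
    superHz x y k = coeffZ (hGen x * eGen y) k := by
  simp [superHz, coeffZ, ← mk_superH]

theorem coeffZ_natCast (F : K⟦X⟧) (k : ℕ) : coeffZ F k = coeff k F := by
  simp [coeffZ]

theorem coeffZ_of_neg (F : K⟦X⟧) {k : ℤ} (hk : k < 0) : coeffZ F k = 0 := if_pos hk

theorem coeffZ_mul_eq_sum_range (F G : K⟦X⟧) (k : ℤ) {N : ℕ}
    (h : ∀ d ≥ N, coeffZ F (k - d) * coeff d G = 0) :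
    coeffZ (F * G) k = ∑ d ∈ Finset.range N, coeffZ F (k - d) * coeff d G := by
  have hneg (d : ℕ) (hd : d ≥ (k + 1).toNat) : coeffZ F (k - d) * coeff d G = 0 := by
    rw [coeffZ_of_neg F (by omega), zero_mul]
  rw [← Finset.eventually_constant_sum h (le_max_left N (k + 1).toNat),
    Finset.eventually_constant_sum hneg (le_max_right N (k + 1).toNat)]
  rcases lt_or_ge k 0 with hk | hk
  · simp [coeffZ_of_neg _ hk, Int.toNat_of_nonpos (show k + 1 ≤ 0 by omega)]
  · lift k to ℕ using hk
    rw [coeffZ_natCast, mul_comm F, coeff_mul,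
      Finset.Nat.sum_antidiagonal_eq_sum_range_succ fun i j => coeff i G * coeff j F]
    refine Finset.sum_congr (by simp) fun d hd => ?_
    rw [← Nat.cast_sub (by simpa [Nat.lt_succ_iff] using hd), coeffZ_natCast, mul_comm]

theorem coeffZ_mul_one_add (F : K⟦X⟧) (a : K) (k : ℤ) :
    coeffZ (F * (1 + C a * X)) (k + 1) = coeffZ F (k + 1) + a * coeffZ F k := by
  have hdeg (d : ℕ) (hd : 2 ≤ d) : coeff d (1 + C a * X) = 0 := by
    simpa using coeff_prod_one_add_C_mul_X_of_card_lt (S := {()}) (fun _ => a) hd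
  rw [coeffZ_mul_eq_sum_range F _ _ fun d hd => by rw [hdeg d hd, mul_zero]]
  simp [Finset.sum_range_succ, coeff_one, mul_comm]

theorem coeffZ_rescale_neg_one (F : K⟦X⟧) (p i j : ℕ) :
    coeffZ (rescale (-1) F) ((p : ℤ) - i + j)
      = (-1) ^ (p + i) * ((-1) ^ j * coeffZ F ((p : ℤ) - i + j)) := by
  rcases lt_or_ge ((p : ℤ) - i + j) 0 with h | h
  · simp [coeffZ_of_neg _ h]
  · obtain ⟨k, hk⟩ := Int.eq_ofNat_of_zero_le h
    rw [hk, coeffZ_natCast, coeffZ_natCast, coeff_rescale, ← mul_assoc, ← pow_add,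
      show p + i + j = k + 2 * i by omega, pow_add, pow_mul, neg_one_sq, one_pow, mul_one]

end CoeffZ

section JacobiTrudi

/-- The `n × n` matrix with `(i, j)` entry the coefficient of `t ^ (lam i - i + j)` in `F j`. For a
constant family `F` this is the Jacobi–Trudi matrix of `F`; families that vary with the column
arise from column operations on it. -/
noncomputable def jacobiTrudi (n : ℕ) (F : ℕ → K⟦X⟧) (lam : ℕ → ℕ) : Matrix (Fin n) (Fin n) K :=
  Matrix.of fun i j => coeffZ (F j) ((lam i : ℤ) - i + j)

theorem jacobiTrudi_apply {n : ℕ} (F : ℕ → K⟦X⟧) (lam : ℕ → ℕ) (i j : Fin n) :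
    jacobiTrudi n F lam i j = coeffZ (F j) ((lam i : ℤ) - i + j) := rfl

theorem schur_eq_det_jacobiTrudi {m : ℕ} (x : Fin m → K) (mu : ℕ → ℕ) :
    schur x mu = (jacobiTrudi m (fun _ => hGen x) mu).det := by
  simp_rw [schur, hz_eq_coeffZ, jacobiTrudi]

theorem hookSchur_eq_det_jacobiTrudi {r s : ℕ} (x : Fin r → K) (y : Fin s → K) (m : ℕ)
    (lam : ℕ → ℕ) :
    hookSchur x y m lam = (jacobiTrudi m (fun _ => hGen x * eGen y) lam).det := by
  simp_rw [hookSchur, superHz_eq_coeffZ, jacobiTrudi]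

theorem det_jacobiTrudi_zero (n : ℕ) (F : ℕ → K⟦X⟧) :
    (jacobiTrudi n F 0).det = ∏ j : Fin n, constantCoeff (F j) := by
  rw [Matrix.det_of_isUpperTriangular]
  · simp [jacobiTrudi_apply, coeffZ]
  · intro i j (hij : j < i)
    exact coeffZ_of_neg _ (by simp only [Pi.zero_apply]; omega)

theorem jacobiTrudi_mul_jacobiTrudi_zero {n : ℕ} (F : K⟦X⟧) (G : ℕ → K⟦X⟧) (lam : ℕ → ℕ)
    (h : ∀ i j : Fin n, ∀ d > (j : ℕ),
      coeffZ F ((lam i : ℤ) - i + j - d) * coeff d (G j) = 0) :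
    jacobiTrudi n (fun _ => F) lam * jacobiTrudi n G 0
      = jacobiTrudi n (fun j => F * G j) lam := by
  ext i j
  have hle : (j : ℕ) + 1 ≤ n := j.isLt
  have hzero : ∀ k ≥ (j : ℕ) + 1,
      coeffZ F ((lam i : ℤ) - i + k) * coeffZ (G j) (0 - k + j) = 0 := fun k hk => by
    rw [coeffZ_of_neg (G j) (by omega), mul_zero]
  calc ∑ k : Fin n, coeffZ F ((lam i : ℤ) - i + k) * coeffZ (G j) (0 - k + j)
      = ∑ k ∈ Finset.range (j + 1),
          coeffZ F ((lam i : ℤ) - i + k) * coeffZ (G j) (0 - k + j) := by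
        rw [Fin.sum_univ_eq_sum_range fun k : ℕ =>
          coeffZ F ((lam i : ℤ) - i + k) * coeffZ (G j) (0 - k + j),
          Finset.eventually_constant_sum hzero hle]
    _ = ∑ d ∈ Finset.range (j + 1), coeffZ F ((lam i : ℤ) - i + j - d) * coeff d (G j) := by
        rw [← Finset.sum_range_reflect]
        refine Finset.sum_congr rfl fun d hd => ?_
        have hd : d ≤ j := Finset.mem_range_succ_iff.1 hd
        rw [← coeffZ_natCast]
        congr 2 <;> omega
    _ = coeffZ (F * G j) ((lam i : ℤ) - i + j) :=
        (coeffZ_mul_eq_sum_range F (G j) _ (h i j)).symm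

theorem det_jacobiTrudi_mul {n : ℕ} (F : K⟦X⟧) {G : ℕ → K⟦X⟧} (lam : ℕ → ℕ)
    (hconst : ∀ j, constantCoeff (G j) = 1) (hdeg : ∀ j, ∀ d > j, coeff d (G j) = 0) :
    (jacobiTrudi n (fun j => F * G j) lam).det = (jacobiTrudi n (fun _ => F) lam).det := by
  rw [← jacobiTrudi_mul_jacobiTrudi_zero F G lam fun i j d hd => by rw [hdeg j d hd, mul_zero],
    Matrix.det_mul, det_jacobiTrudi_zero]
  simp only [hconst, Finset.prod_const_one, mul_one]

theorem det_jacobiTrudi_rescale_neg_one (n : ℕ) (F : K⟦X⟧) (lam : ℕ → ℕ) :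
    (jacobiTrudi n (fun _ => rescale (-1) F) lam).det
      = (∏ i : Fin n, (-1) ^ lam i) * (jacobiTrudi n (fun _ => F) lam).det := by
  have hsign : jacobiTrudi n (fun _ => rescale (-1) F) lam = Matrix.of fun i j : Fin n =>
      (-1) ^ (lam i + i) * (Matrix.of fun i j : Fin n =>
        (-1) ^ (j : ℕ) * jacobiTrudi n (fun _ => F) lam i j) i j := by
    ext i j
    exact coeffZ_rescale_neg_one F (lam i) i j
  rw [hsign, Matrix.det_mul_column, Matrix.det_mul_row, ← mul_assoc, ← Finset.prod_mul_distrib]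
  congr 1
  refine Finset.prod_congr rfl fun i _ => ?_
  rw [← pow_add, add_assoc, pow_add, Even.neg_one_pow ⟨(i : ℕ), rfl⟩, mul_one]

end JacobiTrudi

section RectangleFactor

theorem det_of_mul_add_succ {n : ℕ} (f : Fin n → ℕ → K) (c : Fin n → K) (hf : ∀ i, f i n = 0) :
    (Matrix.of fun i j : Fin n => c j * f i j + f i (j + 1)).det
      = (∏ j, c j) * (Matrix.of fun i j : Fin n => f i j).det := by
  let B : Matrix (Fin n) (Fin n) K := Matrix.of fun k j =>
    (if k = j then c j else 0) + if (k : ℕ) = j + 1 then 1 else 0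
  have hB : B.det = ∏ j, c j := by
    rw [Matrix.det_of_isLowerTriangular]
    · simp [B]
    · intro i j (hij : i < j)
      have hsucc : (i : ℕ) ≠ j + 1 := by omega
      simp [B, hij.ne, hsucc]
  rw [mul_comm, ← hB, ← Matrix.det_mul]
  congr 1
  ext i j
  have hnext : ∑ k : Fin n, (if (k : ℕ) = j + 1 then f i k else 0) = f i (j + 1) := by
    rw [Fin.sum_univ_eq_sum_range (fun k => if k = (j : ℕ) + 1 then f i k else 0) n]
    rcases (Nat.succ_le_of_lt j.isLt).lt_or_eq with hj | hj
    · simp [hj]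
    · simp [← Nat.succ_eq_add_one, hj, hf]
  simp [Matrix.mul_apply, B, mul_add, Finset.sum_add_distrib, mul_comm (c j), hnext]

/-- The product `∏_{i < k} (1 - x_i t)`, by which column `k` of a Jacobi–Trudi matrix is multiplied
to make it block triangular. For `k ≥ r` all `r` factors are present. -/
noncomputable def prodOneSub {r : ℕ} (x : Fin r → K) (k : ℕ) : K⟦X⟧ :=
  ∏ i : Fin r with i.val < k, (1 - C (x i) * X)

theorem constantCoeff_prodOneSub {r : ℕ} (x : Fin r → K) (k : ℕ) :
    constantCoeff (prodOneSub x k) = 1 := by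
  simp [prodOneSub]

theorem coeff_prodOneSub_of_lt {r : ℕ} (x : Fin r → K) (k d : ℕ) (hd : k < d) :
    coeff d (prodOneSub x k) = 0 := by
  simpa [prodOneSub, sub_eq_add_neg] using coeff_prod_one_add_C_mul_X_of_card_lt
    (S := {i : Fin r | i.val < k}) (fun i => -x i) (by rw [Fin.card_filter_val_lt]; omega)

theorem prodOneSub_succ {r : ℕ} (x : Fin r → K) (k : Fin r) :
    prodOneSub x (k + 1) = prodOneSub x k * (1 - C (x k) * X) := by
  have hinsert : Finset.univ.filter (fun i : Fin r => (i : ℕ) < k + 1) =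
      insert k (Finset.univ.filter fun i : Fin r => (i : ℕ) < k) := by
    ext i
    simp only [Finset.mem_filter_univ, Finset.mem_insert, Fin.ext_iff]
    omega
  rw [prodOneSub, hinsert, Finset.prod_insert (by simp), mul_comm, prodOneSub]

theorem hGen_mul_prodOneSub_of_le {r : ℕ} (x : Fin r → K) {k : ℕ} (hk : r ≤ k) :
    hGen x * prodOneSub x k = 1 := by
  rw [prodOneSub, Finset.filter_true_of_mem fun i _ => i.isLt.trans_le hk, hGen_mul_prod_one_sub]

theorem det_jacobiTrudi_mul_one_add {r : ℕ} (x : Fin r → K) (F : K⟦X⟧) (b : K) (lam : ℕ → ℕ)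
    (h : ∀ i : Fin r, coeffZ (F * prodOneSub x r) ((lam i : ℤ) - i + r) = 0) :
    (jacobiTrudi r (fun j => F * (1 + C b * X) * prodOneSub x j) (fun i => lam i + 1)).det
      = (∏ i, (x i + b)) * (jacobiTrudi r (fun j => F * prodOneSub x j) lam).det := by
  refine Eq.trans ?_ (det_of_mul_add_succ
    (fun i k => coeffZ (F * prodOneSub x k) ((lam i : ℤ) - i + k)) (fun j => x j + b) h)
  congr 1
  ext i j
  have hexp : ((lam i + 1 : ℕ) : ℤ) - i + j = (lam i : ℤ) - i + j + 1 := by push_cast; ring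
  have hnext : F * prodOneSub x (j + 1) = F * prodOneSub x j * (1 + C (-x j) * X) := by
    rw [prodOneSub_succ, map_neg, neg_mul, ← sub_eq_add_neg, mul_assoc]
  rw [jacobiTrudi_apply, hexp, mul_right_comm, coeffZ_mul_one_add, Matrix.of_apply, hnext,
    Nat.cast_add_one, ← add_assoc, coeffZ_mul_one_add]
  ring

theorem det_jacobiTrudi_hGen_mul_prod {r : ℕ} {ι : Type*} (x : Fin r → K) (y : ι → K)
    (S : Finset ι) (mu : ℕ → ℕ) :
    (jacobiTrudi r (fun j => hGen x * (∏ l ∈ S, (1 + C (y l) * X)) * prodOneSub x j)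
        (fun i => #S + mu i)).det
      = (∏ l ∈ S, ∏ i, (x i + y l)) * schur x mu := by
  classical
  induction S using Finset.induction_on with
  | empty =>
    simp [schur_eq_det_jacobiTrudi, det_jacobiTrudi_mul (hGen x) mu
      (constantCoeff_prodOneSub x) (coeff_prodOneSub_of_lt x)]
  | insert l S hl ih =>
    have hvanish (i : Fin r) : coeffZ (hGen x * (∏ l ∈ S, (1 + C (y l) * X)) * prodOneSub x r)
        (((#S + mu i : ℕ) : ℤ) - i + r) = 0 := by
      obtain ⟨d, hd⟩ : ∃ d : ℕ, ((#S + mu i : ℕ) : ℤ) - i + r = d :=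
        Int.eq_ofNat_of_zero_le (by omega)
      rw [mul_right_comm, hGen_mul_prodOneSub_of_le x le_rfl, one_mul, hd, coeffZ_natCast,
        coeff_prod_one_add_C_mul_X_of_card_lt y (by omega)]
    have hstep := det_jacobiTrudi_mul_one_add x _ (y l) (fun i => #S + mu i) hvanish
    rw [ih, ← mul_assoc, ← Finset.prod_insert (f := fun l => ∏ i, (x i + y l)) hl] at hstep
    rw [← hstep, Finset.prod_insert hl, Finset.card_insert_of_notMem hl]
    simp_rw [mul_comm (1 + C (y l) * X), add_right_comm, mul_assoc]

theorem hookSchur_eq_prod_mul_schur_mul_det {r s n : ℕ} (x : Fin r → K) (y : Fin s → K)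
    {mu lam : ℕ → ℕ} (hlam : ∀ i < r, lam i = s + mu i) :
    hookSchur x y (r + n) lam = (∏ i, ∏ j, (x i + y j)) * schur x mu *
      (jacobiTrudi n (fun _ => eGen y) (fun i => lam (r + i))).det := by
  set M := jacobiTrudi (r + n) (fun j => hGen x * eGen y * prodOneSub x j) lam with hM
  have hcoeff_right (i : Fin (r + n)) (j : Fin n) :
      M i (Fin.natAdd r j) = coeffZ (eGen y) ((lam i : ℤ) - i + (r + j)) := by
    rw [hM, jacobiTrudi_apply, mul_right_comm, Fin.val_natAdd,
      hGen_mul_prodOneSub_of_le x (by omega), one_mul, Nat.cast_add]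
  have hcoeff_gt {k : ℤ} (hk : s < k) : coeffZ (eGen y) k = 0 := by
    lift k to ℕ using by omega
    rw [coeffZ_natCast, eGen_eq_prod_one_add,
      coeff_prod_one_add_C_mul_X_of_card_lt y (by simpa using hk)]
  have hblocks : M.submatrix finSumFinEquiv finSumFinEquiv = Matrix.fromBlocks
      (jacobiTrudi r (fun j => hGen x * eGen y * prodOneSub x j) (fun i => s + mu i)) 0
      (M.submatrix (Fin.natAdd r) (Fin.castAdd n))
      (jacobiTrudi n (fun _ => eGen y) (fun i => lam (r + i))) := by
    ext (i | i) (j | j)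
    · simp [M, jacobiTrudi_apply, hlam i i.isLt]
    · exact (hcoeff_right _ j).trans (hcoeff_gt (by
        simp only [finSumFinEquiv_apply_left, Fin.val_castAdd, hlam i i.isLt]
        omega))
    · rfl
    · refine (hcoeff_right _ j).trans ?_
      rw [Matrix.fromBlocks_apply₂₂, jacobiTrudi_apply, finSumFinEquiv_apply_right,
        Fin.val_natAdd]
      congr 1
      push_cast
      ring
  have hcorner := det_jacobiTrudi_hGen_mul_prod x y Finset.univ mu
  rw [← eGen_eq_prod_one_add, Finset.card_fin, Finset.prod_comm] at hcorner
  rw [hookSchur_eq_det_jacobiTrudi, ← det_jacobiTrudi_mul _ lam (constantCoeff_prodOneSub x)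
    (coeff_prodOneSub_of_lt x), ← Matrix.det_submatrix_equiv_self finSumFinEquiv, hblocks,
    Matrix.det_fromBlocks_zero₁₂, hcorner]

end RectangleFactor

section DualJacobiTrudi

theorem det_submatrix_inl_of_mul_eq_one {ι m n : Type*} [Fintype ι] [Fintype m] [Fintype n]
    [DecidableEq ι] [DecidableEq m] [DecidableEq n] {A B : Matrix ι ι K} (h : A * B = 1)
    (e e' : m ⊕ n ≃ ι) :
    (A.submatrix (e ∘ Sum.inl) (e' ∘ Sum.inl)).det
      = Equiv.Perm.sign (e.symm.trans e') * A.det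
        * (B.submatrix (e' ∘ Sum.inr) (e ∘ Sum.inr)).det := by
  set A' := A.submatrix e e'
  set B' := B.submatrix e' e
  have hblocks : A' * B' = 1 := by
    rw [Matrix.submatrix_mul_equiv, h, Matrix.submatrix_one_equiv]
  have hdet : A'.det = Equiv.Perm.sign (e.symm.trans e') * A.det := by
    rw [← Matrix.det_permute', ← Matrix.det_submatrix_equiv_self e, Matrix.submatrix_submatrix]
    congr 1
    ext a b
    simp [A']
  rw [← Matrix.fromBlocks_toBlocks A', ← Matrix.fromBlocks_toBlocks B', Matrix.fromBlocks_multiply,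
    ← Matrix.fromBlocks_one, Matrix.fromBlocks_inj] at hblocks
  obtain ⟨-, h₁₂, -, h₂₂⟩ := hblocks
  have hmul : A' * Matrix.fromBlocks 1 B'.toBlocks₁₂ 0 B'.toBlocks₂₂
      = Matrix.fromBlocks A'.toBlocks₁₁ 0 A'.toBlocks₂₁ 1 := by
    conv_lhs => rw [← Matrix.fromBlocks_toBlocks A']
    simp [Matrix.fromBlocks_multiply, h₁₂, h₂₂]
  have hminor := congrArg Matrix.det hmul
  rw [Matrix.det_mul, Matrix.det_fromBlocks_zero₂₁, Matrix.det_fromBlocks_zero₁₂, Matrix.det_one,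
    Matrix.det_one, one_mul, mul_one, hdet] at hminor
  exact hminor.symm

theorem sign_eq_prod_of_strictMono {s n : ℕ} (π : Equiv.Perm (Fin (s + n)))
    (hleft : StrictMono fun i => π (Fin.castAdd n i))
    (hright : StrictMono fun j => π (Fin.natAdd s j)) :
    Equiv.Perm.sign π = ∏ j : Fin n, (-1) ^ #{i | π (Fin.natAdd s j) < π (Fin.castAdd n i)} := by
  simp_rw [Equiv.Perm.sign_eq_prod_prod_Iio, ← Finset.filter_gt_eq_Iio, Finset.prod_filter,
    Fin.prod_univ_add]
  have hll (i i' : Fin s) : (if Fin.castAdd n i' < Fin.castAdd n i then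
      if π (Fin.castAdd n i') < π (Fin.castAdd n i) then 1 else -1 else 1) = (1 : ℤˣ) := by
    rw [ite_eq_right_iff]
    exact fun h => if_pos (hleft h)
  have hrl (i : Fin s) (j : Fin n) : ¬ Fin.natAdd s j < Fin.castAdd n i := by
    simp only [Fin.lt_def, Fin.val_natAdd, Fin.val_castAdd]
    omega
  have hrr (j j' : Fin n) : (if Fin.natAdd s j' < Fin.natAdd s j then
      if π (Fin.natAdd s j') < π (Fin.natAdd s j) then 1 else -1 else 1) = (1 : ℤˣ) := by
    rw [ite_eq_right_iff]
    exact fun h => if_pos (hright (by simpa using h))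
  have hlr (i : Fin s) (j : Fin n) : (if Fin.castAdd n i < Fin.natAdd s j then
      if π (Fin.castAdd n i) < π (Fin.natAdd s j) then 1 else -1 else 1)
        = if π (Fin.natAdd s j) < π (Fin.castAdd n i) then -1 else (1 : ℤˣ) := by
    have hne : π (Fin.natAdd s j) ≠ π (Fin.castAdd n i) :=
      π.injective.ne fun h => by
        simp only [Fin.ext_iff, Fin.val_natAdd, Fin.val_castAdd] at h
        omega
    rw [if_pos (by simp only [Fin.lt_def, Fin.val_natAdd, Fin.val_castAdd]; omega)]
    rcases hne.lt_or_gt with h | h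
    · rw [if_pos h, if_neg h.not_gt]
    · rw [if_pos h, if_neg h.not_gt]
  simp only [hll, hrl, hrr, hlr, if_false, Finset.prod_const_one, one_mul, mul_one]
  simp_rw [← Finset.prod_filter, Finset.prod_const]

/-- The conjugate `ν'` of the partition `ν = (ν_0, …, ν_{s-1})`: its `j`-th part is the number of
parts of `ν` exceeding `j`. -/
def conjugate (s : ℕ) (nu : ℕ → ℕ) (j : ℕ) : ℕ := #{i ∈ Finset.range s | j < nu i}

variable {s n : ℕ} {nu : ℕ → ℕ}

theorem conjugate_le (s : ℕ) (nu : ℕ → ℕ) (j : ℕ) : conjugate s nu j ≤ s :=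
  (Finset.card_filter_le _ _).trans_eq (Finset.card_range s)

theorem conjugate_antitone (s : ℕ) (nu : ℕ → ℕ) : Antitone (conjugate s nu) :=
  fun _ _ h => Finset.card_le_card (Finset.monotone_filter_right _ fun _ _ hi => h.trans_lt hi)

theorem lt_conjugate_iff (hnu : Antitone nu) {i : ℕ} (hi : i < s) (j : ℕ) :
    i < conjugate s nu j ↔ j < nu i := by
  constructor
  · contrapose!
    intro hj
    have hsub : {k ∈ Finset.range s | j < nu k} ⊆ Finset.range i := fun k hk =>
      Finset.mem_range.2 <| lt_of_not_ge fun hik =>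
        ((Finset.mem_filter.1 hk).2.trans_le (hnu hik)).not_ge hj
    simpa [conjugate] using Finset.card_le_card hsub
  · intro hj
    have hsub : Finset.range (i + 1) ⊆ {k ∈ Finset.range s | j < nu k} := fun k hk => by
      have hki : k ≤ i := Finset.mem_range_succ_iff.1 hk
      exact Finset.mem_filter.2 ⟨Finset.mem_range.2 (hki.trans_lt hi), hj.trans_le (hnu hki)⟩
    simpa [conjugate] using Finset.card_le_card hsub

theorem card_filter_lt_rev (s : ℕ) (nu : ℕ → ℕ) (j : ℕ) :
    #{i : Fin s | j < nu i.rev} = conjugate s nu j := by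
  rw [conjugate, Finset.card_filter, Finset.card_filter, ← Fin.sum_univ_eq_sum_range
    fun i => if j < nu i then 1 else 0]
  exact Equiv.sum_comp Fin.revPerm fun i : Fin s => if j < nu i then 1 else 0

/-- The position of the `i`-th vertical step, counted from the bottom left corner, along the
boundary path of the partition `ν = (ν_0, …, ν_{s-1})`. -/
def verticalStep (nu : ℕ → ℕ) (i : Fin s) : ℕ := nu i.rev + i

/-- The position of the `j`-th horizontal step, counted from the bottom left corner, along the
boundary path of the partition `ν = (ν_0, …, ν_{s-1})`. -/
def horizontalStep (s : ℕ) (nu : ℕ → ℕ) (j : ℕ) : ℕ := s + j - conjugate s nu j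

theorem verticalStep_strictMono (hnu : Antitone nu) :
    StrictMono (verticalStep nu : Fin s → ℕ) := fun _ _ h =>
  add_lt_add_of_le_of_lt (hnu (Fin.val_le_of_le (Fin.rev_le_rev.2 h.le))) h

theorem horizontalStep_strictMono (s : ℕ) (nu : ℕ → ℕ) : StrictMono (horizontalStep s nu) := by
  intro j j' h
  have hanti := conjugate_antitone s nu h.le
  have hle := conjugate_le s nu j
  simp only [horizontalStep]
  omega

theorem horizontalStep_lt_verticalStep_iff (hnu : Antitone nu) (i : Fin s) (j : ℕ) :
    horizontalStep s nu j < verticalStep nu i ↔ j < nu i.rev := by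
  have hiff := lt_conjugate_iff hnu i.rev.isLt j
  have hle := conjugate_le s nu j
  simp only [horizontalStep, verticalStep, Fin.val_rev] at *
  omega

theorem verticalStep_ne_horizontalStep (hnu : Antitone nu) (i : Fin s) (j : ℕ) :
    verticalStep nu i ≠ horizontalStep s nu j := by
  have hiff := lt_conjugate_iff hnu i.rev.isLt j
  have hle := conjugate_le s nu j
  simp only [horizontalStep, verticalStep, Fin.val_rev] at *
  omega

theorem exists_perm_step (hnu : Antitone nu) (hn : nu 0 ≤ n) :
    ∃ π : Equiv.Perm (Fin (s + n)),
      (∀ i, (π (Fin.castAdd n i) : ℕ) = verticalStep nu i) ∧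
        ∀ j, (π (Fin.natAdd s j) : ℕ) = horizontalStep s nu j := by
  have hvert (i : Fin s) : verticalStep nu i < s + n := by
    have hle := hnu (Nat.zero_le i.rev)
    simp only [verticalStep]
    omega
  have hhor (j : Fin n) : horizontalStep s nu j < s + n := by
    simp only [horizontalStep]
    omega
  let f : Fin s ⊕ Fin n → Fin (s + n) :=
    Sum.elim (fun i => ⟨verticalStep nu i, hvert i⟩) fun j => ⟨horizontalStep s nu j, hhor j⟩
  have hf : Function.Injective f := by
    refine Function.Injective.sumElim ?_ ?_ fun i j h =>
      verticalStep_ne_horizontalStep hnu i j (Fin.val_eq_of_eq h)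
    · exact fun i i' h => (verticalStep_strictMono hnu).injective (Fin.val_eq_of_eq h)
    · exact fun j j' h => Fin.ext ((horizontalStep_strictMono s nu).injective (Fin.val_eq_of_eq h))
  have hbij : Function.Bijective f :=
    (Fintype.bijective_iff_injective_and_card f).2 ⟨hf, by simp⟩
  refine ⟨finSumFinEquiv.symm.trans (Equiv.ofBijective f hbij), fun i => ?_, fun j => ?_⟩ <;>
    simp [f]

theorem sign_eq_prod_neg_one_pow_conjugate (hnu : Antitone nu) {π : Equiv.Perm (Fin (s + n))}
    (hvert : ∀ i, (π (Fin.castAdd n i) : ℕ) = verticalStep nu i)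
    (hhor : ∀ j, (π (Fin.natAdd s j) : ℕ) = horizontalStep s nu j) :
    Equiv.Perm.sign π = ∏ j : Fin n, (-1) ^ conjugate s nu j := by
  rw [sign_eq_prod_of_strictMono π]
  · simp_rw [Fin.lt_def, hvert, hhor, horizontalStep_lt_verticalStep_iff hnu, card_filter_lt_rev]
  · intro i i' h
    simpa only [Fin.lt_def, hvert] using verticalStep_strictMono hnu h
  · intro j j' h
    simpa only [Fin.lt_def, hhor] using horizontalStep_strictMono s nu h

theorem det_submatrix_verticalStep (F : K⟦X⟧) {π : Equiv.Perm (Fin (s + n))}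
    (hvert : ∀ i, (π (Fin.castAdd n i) : ℕ) = verticalStep nu i) :
    ((jacobiTrudi (s + n) (fun _ => F) 0).submatrix (Fin.castAdd n) (π ∘ Fin.castAdd n)).det
      = (jacobiTrudi s (fun _ => F) nu).det := by
  rw [← Matrix.det_transpose, ← Matrix.det_submatrix_equiv_self Fin.revPerm (jacobiTrudi s _ nu)]
  congr 1
  ext i j
  simp only [Matrix.transpose_apply, Matrix.submatrix_apply, jacobiTrudi_apply,
    Function.comp_apply, hvert, verticalStep, Fin.revPerm_apply, Fin.val_rev, Fin.val_castAdd]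
  congr 1
  simp only [Pi.zero_apply]
  omega

theorem submatrix_horizontalStep (G : K⟦X⟧) {π : Equiv.Perm (Fin (s + n))}
    (hhor : ∀ j, (π (Fin.natAdd s j) : ℕ) = horizontalStep s nu j) :
    (jacobiTrudi (s + n) (fun _ => G) 0).submatrix (π ∘ Fin.natAdd s) (Fin.natAdd s)
      = jacobiTrudi n (fun _ => G) (conjugate s nu) := by
  ext i j
  have hle := conjugate_le s nu i
  simp only [Matrix.submatrix_apply, jacobiTrudi_apply, Function.comp_apply, hhor, horizontalStep,
    Fin.val_natAdd]
  congr 1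
  simp only [Pi.zero_apply]
  omega

theorem jacobiTrudi_one_zero (N : ℕ) : jacobiTrudi N (fun _ => (1 : K⟦X⟧)) 0 = 1 := by
  ext i j
  rw [jacobiTrudi_apply, Matrix.one_apply, coeffZ, coeff_one]
  simp only [Pi.zero_apply, Fin.ext_iff]
  split_ifs <;> first | rfl | omega

theorem jacobiTrudi_zero_mul_of_mul_eq_one (N : ℕ) {F G : K⟦X⟧} (h : F * G = 1) :
    jacobiTrudi N (fun _ => F) 0 * jacobiTrudi N (fun _ => G) 0 = 1 := by
  rw [jacobiTrudi_mul_jacobiTrudi_zero F (fun _ => G) 0 fun i j d hd => ?_, h,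
    jacobiTrudi_one_zero]
  rw [coeffZ_of_neg F (by simp only [Pi.zero_apply]; omega), zero_mul]

theorem det_jacobiTrudi_eq_det_jacobiTrudi_conjugate (hnu : Antitone nu) (hn : nu 0 ≤ n)
    {F G : K⟦X⟧} (hF : constantCoeff F = 1) (hFG : F * rescale (-1) G = 1) :
    (jacobiTrudi s (fun _ => F) nu).det = (jacobiTrudi n (fun _ => G) (conjugate s nu)).det := by
  obtain ⟨π, hvert, hhor⟩ := exists_perm_step (s := s) hnu hn
  have hperm : finSumFinEquiv.symm.trans (finSumFinEquiv.trans π) = π := by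
    ext
    simp
  have hminor := det_submatrix_inl_of_mul_eq_one (jacobiTrudi_zero_mul_of_mul_eq_one (s + n) hFG)
    finSumFinEquiv (finSumFinEquiv.trans π)
  have hdet : (jacobiTrudi (s + n) (fun _ => F) 0).det = 1 := by
    simp [det_jacobiTrudi_zero, hF]
  calc (jacobiTrudi s (fun _ => F) nu).det
      = Equiv.Perm.sign π * (jacobiTrudi n (fun _ => rescale (-1) G) (conjugate s nu)).det := by
        rw [hperm, hdet, mul_one] at hminor
        rw [← det_submatrix_verticalStep F hvert, ← submatrix_horizontalStep _ hhor]
        exact hminor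
    _ = ((∏ j : Fin n, (-1) ^ conjugate s nu j) * ∏ j : Fin n, (-1) ^ conjugate s nu j) *
          (jacobiTrudi n (fun _ => G) (conjugate s nu)).det := by
        rw [sign_eq_prod_neg_one_pow_conjugate hnu hvert hhor, det_jacobiTrudi_rescale_neg_one,
          ← mul_assoc]
        push_cast
        rfl
    _ = (jacobiTrudi n (fun _ => G) (conjugate s nu)).det := by
        simp_rw [← Finset.prod_mul_distrib, ← mul_pow, neg_mul_neg, one_mul, one_pow,
          Finset.prod_const_one, one_mul]

theorem schur_eq_det_jacobiTrudi_conjugate (y : Fin s → K) (hnu : Antitone nu) (hn : nu 0 ≤ n) :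
    schur y nu = (jacobiTrudi n (fun _ => eGen y) (conjugate s nu)).det := by
  rw [schur_eq_det_jacobiTrudi, det_jacobiTrudi_eq_det_jacobiTrudi_conjugate hnu hn
    (constantCoeff_hGen y) (hGen_mul_rescale_eGen y)]

end DualJacobiTrudi

end HookSchur

theorem stmt_16_general {K : Type*} [CommRing K] {r s n : ℕ} (x : Fin r → K) (y : Fin s → K)
    {mu nu lam : ℕ → ℕ} (hnu : Antitone nu) (hn : nu 0 ≤ n) (hlam1 : ∀ i < r, lam i = s + mu i)
    (hlam2 : ∀ j, lam (r + j) = ((Finset.range s).filter fun i => j < nu i).card) :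
    hookSchur x y (r + n) lam = (∏ i, ∏ j, (x i + y j)) * schur x mu * schur y nu := by
  have hconjugate : (fun i => lam (r + i)) = HookSchur.conjugate s nu := funext hlam2
  rw [HookSchur.hookSchur_eq_prod_mul_schur_mul_det x y hlam1, hconjugate,
    HookSchur.schur_eq_det_jacobiTrudi_conjugate y hnu hn]

/-- for a partition `λ = (s^r) + μ ∪ ν'` containing the `r × s`
rectangle, with `μ` having at most `r` parts and `ν` at most `s` parts, the hook Schur
function factorizes:
`hs_λ(x/y) = ∏_{i,j} (xᵢ + yⱼ) · s_μ(x) · s_ν(y)`  (Macdonald, Ex. I.3.23). -/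
theorem stmt_16 {K : Type*} [CommRing K] (r s : ℕ)
    (x : Fin r → K) (y : Fin s → K)
    (mu nu : ℕ → ℕ) (hmu : Antitone mu) (hnu : Antitone nu)
    (hmu0 : ∀ i, r ≤ i → mu i = 0) (hnu0 : ∀ j, s ≤ j → nu j = 0)
    (lam : ℕ → ℕ)
    (hlam1 : ∀ i < r, lam i = s + mu i)
    (hlam2 : ∀ j, lam (r + j) = ((Finset.range s).filter fun i => j < nu i).card) :
    hookSchur x y (r + nu 0) lam =
      (∏ i : Fin r, ∏ j : Fin s, (x i + y j)) * schur x mu * schur y nu :=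
  stmt_16_general x y hnu le_rfl hlam1 hlam2
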